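/- There exists an absolute constant C ≥ 1 such that the following holds. Let f : {0,1}^n → {0,1} be a monotone Boolean function, let 0 < p < q ≤ 1/2, and let M > 0. Suppose f is M-global in the interval [p,q] (i.e. for every x ∈ [p,q] and every J ⊆ [n] with |J| ≤ M one has μ_x(f_{J→1}) ≤ μ_x(f)^{0.01}), that μ_q(f) ≤ 1/2, and that μ_p(f) ≥ e^{−M/C}. Then μ_q(f) ≥ μ_p(f)^{(p/q)^{1/C}}; in particular, q ≤ M^C·p. -/

import Mathlib

/-!
Write `μ_x = μ_x(f)`. A hypercontractive inequality bounds `‖T_{1/2} h‖₄⁴` by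
`∑_S (x(1-x))^|S| I_S(h)²`, the `I_S` being the generalised influences. For monotone Boolean `f`
one has `I_S(f) ≤ 4^|S| μ_x(f_{S→1})`, and globalness makes the right-hand side at most
`4^|S| μ_x^ε`. Applying this to `h = T_2 f^{≤ d}` with `d` a small multiple of `ε log (1/μ_x)`,
and Hölder's inequality to `‖f^{≤ d}‖₂² = ⟨f, f^{≤ d}⟩`, shows that at least half of the Fourier
weight of `f` lies above level `d`. Hence the total influence, which by Russo's formula is the
derivative of `x ↦ μ_x`, satisfies `x · dμ_x/dx ≥ (ε/20) · μ_x log (1/μ_x)`. This differential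
inequality says that `x^(ε/20) · log (1/μ_x)` is non-increasing in `x`; compare its values at `p`
and `q`.
-/

open Finset

namespace GlobalHC

variable {n : ℕ}

/-- Expectation with respect to the `p`-biased measure on `{0,1}^n`. -/
noncomputable def Ep (p : ℝ) (f : (Fin n → Bool) → ℝ) : ℝ :=
  ∑ x : Fin n → Bool, (∏ i, if x i then p else 1 - p) * f x

/-- The `r`-norm with respect to the `p`-biased measure. -/
noncomputable def pnorm (p r : ℝ) (f : (Fin n → Bool) → ℝ) : ℝ :=
  (Ep p fun x => |f x| ^ r) ^ (1 / r)

/-- The `p`-biased character `χ_S`. -/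
noncomputable def chi (p : ℝ) (S : Finset (Fin n)) (x : Fin n → Bool) : ℝ :=
  ∏ i ∈ S, ((if x i then (1 : ℝ) else 0) - p) / Real.sqrt (p * (1 - p))

/-- The `p`-biased Fourier coefficient `f̂(S)`. -/
noncomputable def coeff (p : ℝ) (f : (Fin n → Bool) → ℝ) (S : Finset (Fin n)) : ℝ :=
  Ep p fun x => f x * chi p S x

/-- The derivative `D_S f = Σ_{T ⊇ S} f̂(T) χ_{T∖S}`. -/
noncomputable def derivS (p : ℝ) (S : Finset (Fin n)) (f : (Fin n → Bool) → ℝ) :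
    (Fin n → Bool) → ℝ :=
  fun x => ∑ T ∈ Finset.univ.filter (fun T => S ⊆ T), coeff p f T * chi p (T \ S) x

/-- The generalised influence `I_S(f) = σ^{-2|S|} Σ_{T ⊇ S} f̂(T)²`. -/
noncomputable def genInf (p : ℝ) (S : Finset (Fin n)) (f : (Fin n → Bool) → ℝ) : ℝ :=
  (∑ T ∈ Finset.univ.filter (fun T => S ⊆ T), coeff p f T ^ 2) / (p * (1 - p)) ^ S.card

/-- The noise operator `T_ρ f = Σ_S ρ^{|S|} f̂(S) χ_S`. -/
noncomputable def noise (p ρ : ℝ) (f : (Fin n → Bool) → ℝ) : (Fin n → Bool) → ℝ :=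
  fun x => ∑ S : Finset (Fin n), ρ ^ S.card * coeff p f S * chi p S x

/-- The degree-`r` truncation `f^{≤ r}`. -/
noncomputable def trunc (p : ℝ) (r : ℕ) (f : (Fin n → Bool) → ℝ) : (Fin n → Bool) → ℝ :=
  fun x => ∑ S ∈ Finset.univ.filter (fun S : Finset (Fin n) => S.card ≤ r),
    coeff p f S * chi p S x

/-- The restriction `f_{J→1}` setting all coordinates in `J` to `1`. -/
def restrict1 (J : Finset (Fin n)) (f : (Fin n → Bool) → ℝ) : (Fin n → Bool) → ℝ :=
  fun x => f (fun i => if i ∈ J then true else x i)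

/-- `f` is `(r,δ)`-global (for the `p`-biased measure). -/
def IsGlobal (p r δ : ℝ) (f : (Fin n → Bool) → ℝ) : Prop :=
  ∀ J : Finset (Fin n), (J.card : ℝ) ≤ r → Ep p (restrict1 J f) ≤ Ep p f + δ

/-- The total influence `I[f] = Σ_i Pr_{μ_p}[f(x ⊕ e_i) ≠ f(x)]`. -/
noncomputable def totalInf (p : ℝ) (f : (Fin n → Bool) → ℝ) : ℝ :=
  ∑ i : Fin n, Ep p fun x => if f (Function.update x i (!x i)) = f x then 0 else 1

/-- Noise stability `Stab_ρ(f) = Σ_S ρ^{|S|} f̂(S)²` (w.r.t. `μ_p`). -/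
noncomputable def stab (p ρ : ℝ) (f : (Fin n → Bool) → ℝ) : ℝ :=
  ∑ S : Finset (Fin n), ρ ^ S.card * coeff p f S ^ 2

/-- `f` is monotone. -/
def Mono (f : (Fin n → Bool) → ℝ) : Prop :=
  ∀ x y : Fin n → Bool, (∀ i, x i ≤ y i) → f x ≤ f y

/-- `f` takes only the values `0` and `1`, i.e. it is the indicator of a Boolean event. -/
def IsBoolean (f : (Fin n → Bool) → ℝ) : Prop :=
  ∀ x, f x = 0 ∨ f x = 1

/-- The `p`-biased probability of the point `x`. -/
def weight (p : ℝ) (x : Fin n → Bool) : ℝ :=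
  ∏ i, if x i then p else 1 - p

/-- The restriction of `f` to the subcube where the first coordinate equals `b`, as a function of
the remaining coordinates. -/
def slice (b : Bool) (f : (Fin (n + 1) → Bool) → ℝ) : (Fin n → Bool) → ℝ :=
  fun x => f (Fin.cons b x)

/-! ### The biased expectation -/

section Expectation

variable {p : ℝ} {f g : (Fin n → Bool) → ℝ}

lemma weight_nonneg (hp₀ : 0 ≤ p) (hp₁ : p ≤ 1) (x : Fin n → Bool) : 0 ≤ weight p x :=
  prod_nonneg fun i _ => by split <;> linarith

lemma Ep_eq_sum_weight (p : ℝ) (f : (Fin n → Bool) → ℝ) : Ep p f = ∑ x, weight p x * f x := rfl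

lemma Ep_add (p : ℝ) (f g : (Fin n → Bool) → ℝ) : Ep p (f + g) = Ep p f + Ep p g := by
  simp only [Ep_eq_sum_weight, Pi.add_apply, mul_add, sum_add_distrib]

lemma Ep_sub (p : ℝ) (f g : (Fin n → Bool) → ℝ) : Ep p (f - g) = Ep p f - Ep p g := by
  simp only [Ep_eq_sum_weight, Pi.sub_apply, mul_sub, sum_sub_distrib]

lemma Ep_smul (p a : ℝ) (f : (Fin n → Bool) → ℝ) : Ep p (a • f) = a * Ep p f := by
  simp only [Ep_eq_sum_weight, Pi.smul_apply, smul_eq_mul, mul_sum, mul_left_comm]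

lemma Ep_sum {ι : Type*} (p : ℝ) (s : Finset ι) (F : ι → (Fin n → Bool) → ℝ) :
    Ep p (fun x => ∑ i ∈ s, F i x) = ∑ i ∈ s, Ep p (F i) := by
  simp only [Ep_eq_sum_weight, mul_sum]
  exact sum_comm

lemma Ep_mono (hp₀ : 0 ≤ p) (hp₁ : p ≤ 1) (h : ∀ x, f x ≤ g x) : Ep p f ≤ Ep p g :=
  sum_le_sum fun x _ => mul_le_mul_of_nonneg_left (h x) (weight_nonneg hp₀ hp₁ x)

lemma Ep_nonneg (hp₀ : 0 ≤ p) (hp₁ : p ≤ 1) (h : ∀ x, 0 ≤ f x) : 0 ≤ Ep p f :=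
  sum_nonneg fun x _ => mul_nonneg (weight_nonneg hp₀ hp₁ x) (h x)

lemma Ep_mul_sq_le (hp₀ : 0 ≤ p) (hp₁ : p ≤ 1) (f g : (Fin n → Bool) → ℝ) :
    Ep p (f * g) ^ 2 ≤ Ep p (f ^ 2) * Ep p (g ^ 2) :=
  sum_sq_le_sum_mul_sum_of_sq_le_mul _
    (fun x _ => mul_nonneg (weight_nonneg hp₀ hp₁ x) (sq_nonneg (f x)))
    (fun x _ => mul_nonneg (weight_nonneg hp₀ hp₁ x) (sq_nonneg (g x)))
    fun x _ => by simp only [Pi.mul_apply, Pi.pow_apply]; exact le_of_eq (by ring)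

lemma Ep_prod (p : ℝ) (φ : Fin n → Bool → ℝ) :
    Ep p (fun x => ∏ i, φ i (x i)) = ∏ i, (p * φ i true + (1 - p) * φ i false) := by
  have hcoord (i : Fin n) : p * φ i true + (1 - p) * φ i false =
      ∑ b : Bool, (if b then p else 1 - p) * φ i b := by simp
  simp only [hcoord, Finset.prod_univ_sum, Fintype.piFinset_univ, prod_mul_distrib, Ep]

lemma Ep_fin_zero (p : ℝ) (f : (Fin 0 → Bool) → ℝ) : Ep p f = f default := by
  simp only [Ep, univ_unique, univ_eq_empty, prod_empty, one_mul, sum_singleton]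
  exact congrArg f (Subsingleton.elim _ _)

lemma Ep_succ (p : ℝ) (f : (Fin (n + 1) → Bool) → ℝ) :
    Ep p f = p * Ep p (slice true f) + (1 - p) * Ep p (slice false f) := by
  simp only [Ep, ← (Fin.consEquiv fun _ : Fin (n + 1) => Bool).sum_comp, Fintype.sum_prod_type,
    Fintype.sum_bool, Fin.prod_univ_succ, mul_sum, slice, ← mul_assoc]
  rfl

end Expectation

section Boolean

variable {p : ℝ} {f : (Fin n → Bool) → ℝ}

lemma IsBoolean.sq_eq (hf : IsBoolean f) : f ^ 2 = f :=
  funext fun x => by rcases hf x with h | h <;> simp [h]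

lemma IsBoolean.nonneg (hf : IsBoolean f) (x : Fin n → Bool) : 0 ≤ f x := by
  rcases hf x with h | h <;> simp [h]

lemma isBoolean_slice {f : (Fin (n + 1) → Bool) → ℝ} (hf : IsBoolean f) (b : Bool) :
    IsBoolean (slice b f) := fun _ => hf _

lemma IsBoolean.Ep_mul_pow_four_le (hf : IsBoolean f) (hp₀ : 0 ≤ p) (hp₁ : p ≤ 1)
    (g : (Fin n → Bool) → ℝ) : Ep p (f * g) ^ 4 ≤ Ep p f ^ 3 * Ep p (g ^ 4) := by
  have hfirst : Ep p (f * g) ^ 2 ≤ Ep p f * Ep p (f * g ^ 2) := by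
    simpa only [mul_pow, hf.sq_eq, ← mul_assoc, ← sq] using Ep_mul_sq_le hp₀ hp₁ f (f * g)
  have hsecond : Ep p (f * g ^ 2) ^ 2 ≤ Ep p f * Ep p (g ^ 4) := by
    have h := Ep_mul_sq_le hp₀ hp₁ f (g ^ 2)
    rwa [hf.sq_eq, ← pow_mul] at h
  calc Ep p (f * g) ^ 4 = (Ep p (f * g) ^ 2) ^ 2 := by ring
    _ ≤ (Ep p f * Ep p (f * g ^ 2)) ^ 2 := pow_le_pow_left₀ (sq_nonneg _) hfirst 2
    _ = Ep p f ^ 2 * Ep p (f * g ^ 2) ^ 2 := by ring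
    _ ≤ Ep p f ^ 2 * (Ep p f * Ep p (g ^ 4)) := by gcongr
    _ = Ep p f ^ 3 * Ep p (g ^ 4) := by ring

end Boolean

section Monotone

lemma mono_slice {f : (Fin (n + 1) → Bool) → ℝ} (hf : Mono f) (b : Bool) : Mono (slice b f) :=
  fun _ _ hxy => hf _ _ (Fin.cases le_rfl hxy)

lemma Mono.slice_false_le_slice_true {f : (Fin (n + 1) → Bool) → ℝ} (hf : Mono f)
    (x : Fin n → Bool) : slice false f x ≤ slice true f x :=
  hf _ _ (Fin.cases (Bool.false_le _) fun _ => le_rfl)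

lemma Mono.Ep_le_Ep {f : (Fin n → Bool) → ℝ} (hf : Mono f) {p q : ℝ} (hp : 0 ≤ p) (hpq : p ≤ q)
    (hq : q ≤ 1) : Ep p f ≤ Ep q f := by
  induction n with
  | zero => simp only [Ep_fin_zero, le_refl]
  | succ n ih =>
    have htrue := mul_le_mul_of_nonneg_left (ih (mono_slice hf true)) hp
    have hfalse := mul_le_mul_of_nonneg_left (ih (mono_slice hf false))
      (sub_nonneg.2 (hpq.trans hq))
    have hslices := mul_le_mul_of_nonneg_left
      (Ep_mono (hp.trans hpq) hq hf.slice_false_le_slice_true) (sub_nonneg.2 hpq)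
    rw [Ep_succ, Ep_succ]
    linarith

end Monotone

/-! ### Biased Fourier analysis -/

section Fourier

variable {p : ℝ}

/-- The normalised `p`-biased character of a single coordinate; `chi p S` is the product of these
over `S`. -/
noncomputable def coordChar (p : ℝ) (b : Bool) : ℝ :=
  ((if b then 1 else 0) - p) / √(p * (1 - p))

lemma coordChar_mean (p : ℝ) :
    p * coordChar p true + (1 - p) * coordChar p false = 0 := by
  simp only [coordChar, if_true, Bool.false_eq_true, if_false]
  ring

lemma coordChar_mul_coordChar (hp₀ : 0 < p) (hp₁ : p < 1) (b c : Bool) :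
    coordChar p b * coordChar p c =
      ((if b then 1 else 0) - p) * ((if c then 1 else 0) - p) / (p * (1 - p)) := by
  rw [coordChar, coordChar, div_mul_div_comm,
    Real.mul_self_sqrt (mul_nonneg hp₀.le (sub_nonneg.2 hp₁.le))]

lemma coordChar_variance (hp₀ : 0 < p) (hp₁ : p < 1) :
    p * coordChar p true ^ 2 + (1 - p) * coordChar p false ^ 2 = 1 := by
  have hp₁' : 1 - p ≠ 0 := (sub_pos.2 hp₁).ne'
  simp only [sq, coordChar_mul_coordChar hp₀ hp₁, if_true, Bool.false_eq_true, if_false]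
  field_simp
  ring

lemma coordChar_sq_le (hp₀ : 0 < p) (hp₁ : p < 1) (b : Bool) :
    coordChar p b ^ 2 ≤ 1 / (p * (1 - p)) := by
  have hσ : 0 < p * (1 - p) := mul_pos hp₀ (sub_pos.2 hp₁)
  rw [sq, coordChar_mul_coordChar hp₀ hp₁, div_le_div_iff_of_pos_right hσ]
  cases b <;> simp only [Bool.false_eq_true, if_true, if_false] <;> nlinarith

/-- Completeness of the characters on a single bit; its tensor power is Fourier inversion. -/
lemma bit_weight_mul_one_add_coordChar (hp₀ : 0 < p) (hp₁ : p < 1) (b c : Bool) :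
    (if b then p else 1 - p) * (1 + coordChar p b * coordChar p c) = if b = c then 1 else 0 := by
  have hp₁' : 1 - p ≠ 0 := (sub_pos.2 hp₁).ne'
  rw [coordChar_mul_coordChar hp₀ hp₁]
  cases b <;> cases c <;>
    simp only [Bool.false_eq_true, Bool.true_eq_false, if_true, if_false] <;> field_simp <;> ring

lemma chi_eq_prod_coordChar (p : ℝ) (S : Finset (Fin n)) (x : Fin n → Bool) :
    chi p S x = ∏ i ∈ S, coordChar p (x i) := rfl

lemma Ep_chi_mul_chi (hp₀ : 0 < p) (hp₁ : p < 1) (S T : Finset (Fin n)) :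
    Ep p (chi p S * chi p T) = if S = T then 1 else 0 := by
  have hprod : chi p S * chi p T = fun x => ∏ i,
      (if i ∈ S then coordChar p (x i) else 1) * (if i ∈ T then coordChar p (x i) else 1) := by
    ext x
    simp only [Pi.mul_apply, chi_eq_prod_coordChar, prod_mul_distrib, prod_ite_mem, univ_inter]
  have hcoord (i : Fin n) :
      p * ((if i ∈ S then coordChar p true else 1) * (if i ∈ T then coordChar p true else 1)) +
        (1 - p) *
          ((if i ∈ S then coordChar p false else 1) * (if i ∈ T then coordChar p false else 1)) =
      if (i ∈ S ↔ i ∈ T) then 1 else 0 := by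
    have hmean := coordChar_mean p
    have hvar := coordChar_variance hp₀ hp₁
    by_cases hS : i ∈ S <;> by_cases hT : i ∈ T <;>
      simp only [hS, hT, if_true, if_false, iff_true, iff_false, not_true_eq_false] <;>
      linarith
  rw [hprod, Ep_prod p fun i b =>
    (if i ∈ S then coordChar p b else 1) * (if i ∈ T then coordChar p b else 1)]
  simp only [hcoord, Fintype.prod_ite_zero, prod_const_one, Finset.ext_iff]

lemma sum_coeff_mul_chi (hp₀ : 0 < p) (hp₁ : p < 1) (f : (Fin n → Bool) → ℝ) (x : Fin n → Bool) :
    ∑ S, coeff p f S * chi p S x = f x := by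
  have hdelta (y : Fin n → Bool) :
      weight p y * ∑ S, chi p S y * chi p S x = if y = x then 1 else 0 := by
    simp only [weight, chi_eq_prod_coordChar, ← prod_mul_distrib]
    rw [← powerset_univ, ← prod_one_add, ← prod_mul_distrib]
    simp only [bit_weight_mul_one_add_coordChar hp₀ hp₁, Fintype.prod_ite_zero, prod_const_one,
      funext_iff]
  calc ∑ S, coeff p f S * chi p S x
      = ∑ y, (weight p y * ∑ S, chi p S y * chi p S x) * f y := by
        simp only [coeff, Ep_eq_sum_weight, sum_mul, mul_sum]
        rw [sum_comm]
        exact sum_congr rfl fun y _ => sum_congr rfl fun S _ => by ring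
    _ = f x := by simp only [hdelta, ite_mul, one_mul, zero_mul, sum_ite_eq', mem_univ, if_true]

lemma parseval (hp₀ : 0 < p) (hp₁ : p < 1) (f g : (Fin n → Bool) → ℝ) :
    Ep p (f * g) = ∑ S, coeff p f S * coeff p g S := by
  have hexpand : f * g = fun x => ∑ S, (coeff p f S • (g * chi p S)) x := by
    ext x
    simp only [Pi.mul_apply, Pi.smul_apply, smul_eq_mul]
    rw [← sum_coeff_mul_chi hp₀ hp₁ f x, sum_mul]
    exact sum_congr rfl fun S _ => by ring
  rw [hexpand, Ep_sum]
  exact sum_congr rfl fun S _ => Ep_smul _ _ _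

lemma coeff_sum_mul_chi (hp₀ : 0 < p) (hp₁ : p < 1) (c : Finset (Fin n) → ℝ)
    (S : Finset (Fin n)) : coeff p (fun x => ∑ T, c T * chi p T x) S = c S := by
  have hexpand : (fun x => (∑ T, c T * chi p T x) * chi p S x) =
      fun x => ∑ T, (c T • (chi p T * chi p S)) x := by
    ext x
    simp only [sum_mul, Pi.smul_apply, Pi.mul_apply, smul_eq_mul, mul_assoc]
  rw [coeff, hexpand, Ep_sum]
  simp only [Ep_smul, Ep_chi_mul_chi hp₀ hp₁, mul_ite, mul_one, mul_zero, sum_ite_eq', mem_univ,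
    if_true]

lemma coeff_noise (hp₀ : 0 < p) (hp₁ : p < 1) (ρ : ℝ) (f : (Fin n → Bool) → ℝ)
    (S : Finset (Fin n)) : coeff p (noise p ρ f) S = ρ ^ #S * coeff p f S :=
  coeff_sum_mul_chi hp₀ hp₁ (fun T => ρ ^ #T * coeff p f T) S

lemma coeff_trunc (hp₀ : 0 < p) (hp₁ : p < 1) (d : ℕ) (f : (Fin n → Bool) → ℝ)
    (S : Finset (Fin n)) : coeff p (trunc p d f) S = if #S ≤ d then coeff p f S else 0 := by
  have hexpand : trunc p d f = fun x => ∑ T, (if #T ≤ d then coeff p f T else 0) * chi p T x := by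
    ext x
    simp only [trunc, sum_filter, ite_mul, zero_mul]
  rw [hexpand, coeff_sum_mul_chi hp₀ hp₁]

lemma noise_noise_inv (hp₀ : 0 < p) (hp₁ : p < 1) {ρ : ℝ} (hρ : ρ ≠ 0) (f : (Fin n → Bool) → ℝ) :
    noise p ρ (noise p ρ⁻¹ f) = f := by
  ext x
  rw [← sum_coeff_mul_chi hp₀ hp₁ f x, noise]
  simp only [coeff_noise hp₀ hp₁, inv_pow, mul_inv_cancel_left₀ (pow_ne_zero _ hρ)]

lemma coeff_add (p : ℝ) (f g : (Fin n → Bool) → ℝ) (S : Finset (Fin n)) :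
    coeff p (f + g) S = coeff p f S + coeff p g S := by
  simp only [coeff, Pi.add_apply, add_mul]
  exact Ep_add _ _ _

lemma coeff_sub (p : ℝ) (f g : (Fin n → Bool) → ℝ) (S : Finset (Fin n)) :
    coeff p (f - g) S = coeff p f S - coeff p g S := by
  simp only [coeff, Pi.sub_apply, sub_mul]
  exact Ep_sub _ _ _

lemma coeff_smul (p a : ℝ) (f : (Fin n → Bool) → ℝ) (S : Finset (Fin n)) :
    coeff p (a • f) S = a * coeff p f S := by
  simp only [coeff, Pi.smul_apply, smul_eq_mul, mul_assoc]
  exact Ep_smul _ _ _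

lemma coeff_empty (p : ℝ) (f : (Fin n → Bool) → ℝ) : coeff p f ∅ = Ep p f := by
  simp only [coeff, chi, prod_empty, mul_one]

end Fourier

/-! ### Splitting off the first coordinate -/

section FirstCoordinate

variable {p : ℝ}

lemma finset_fin_succ_cases (S : Finset (Fin (n + 1))) :
    ∃ T : Finset (Fin n), S = T.map (Fin.succEmb n) ∨ S = insert 0 (T.map (Fin.succEmb n)) := by
  refine ⟨univ.filter fun i => i.succ ∈ S, ?_⟩
  by_cases h : 0 ∈ S
  · right
    ext i
    cases i using Fin.cases <;> simp [h]
  · left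
    ext i
    cases i using Fin.cases <;> simp [h]

lemma zero_notMem_map_succEmb (S : Finset (Fin n)) : 0 ∉ S.map (Fin.succEmb n) := by
  simp

lemma card_insert_zero_map_succEmb (S : Finset (Fin n)) :
    #(insert 0 (S.map (Fin.succEmb n))) = #S + 1 := by
  rw [card_insert_of_notMem (zero_notMem_map_succEmb S), card_map]

lemma insert_zero_map_succEmb_subset {S T : Finset (Fin n)} :
    insert 0 (S.map (Fin.succEmb n)) ⊆ insert 0 (T.map (Fin.succEmb n)) ↔ S ⊆ T := by
  rw [insert_subset_insert_iff (zero_notMem_map_succEmb S), map_subset_map]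

lemma map_succEmb_subset_insert_zero {S T : Finset (Fin n)} :
    S.map (Fin.succEmb n) ⊆ insert 0 (T.map (Fin.succEmb n)) ↔ S ⊆ T := by
  rw [subset_insert_iff_of_notMem (zero_notMem_map_succEmb S), map_subset_map]

lemma sum_finset_fin_succ {α : Type*} [AddCommMonoid α] (F : Finset (Fin (n + 1)) → α) :
    ∑ S, F S = ∑ S : Finset (Fin n), F (S.map (Fin.succEmb n)) +
      ∑ S : Finset (Fin n), F (insert 0 (S.map (Fin.succEmb n))) := by
  have hpowerset (G : Finset (Fin (n + 1)) → α) :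
      ∑ S ∈ (univ.map (Fin.succEmb n)).powerset, G S =
        ∑ S : Finset (Fin n), G (S.map (Fin.succEmb n)) := by
    simp only [map_eq_image, powerset_image, powerset_univ]
    exact sum_image (image_injective (Fin.succEmb n).injective).injOn
  have huniv : (univ : Finset (Fin (n + 1))) = insert 0 (univ.map (Fin.succEmb n)) := by
    rw [Fin.univ_succ, cons_eq_insert]
    rfl
  rw [← powerset_univ, huniv, sum_powerset_insert (zero_notMem_map_succEmb univ), hpowerset,
    hpowerset]

/-- The average of `f` over its first coordinate: the part of `f` whose Fourier expansion does not
involve that coordinate. -/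
noncomputable def average (p : ℝ) (f : (Fin (n + 1) → Bool) → ℝ) : (Fin n → Bool) → ℝ :=
  p • slice true f + (1 - p) • slice false f

/-- The normalised discrete derivative of `f` in its first coordinate: the coefficient of
`coordChar p (x 0)` in the Fourier expansion of `f`. -/
noncomputable def slope (p : ℝ) (f : (Fin (n + 1) → Bool) → ℝ) : (Fin n → Bool) → ℝ :=
  √(p * (1 - p)) • (slice true f - slice false f)

lemma mul_coordChar_true (p : ℝ) : p * coordChar p true = √(p * (1 - p)) := by
  rw [coordChar, if_pos rfl, ← mul_div_assoc, Real.div_sqrt]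

lemma one_sub_mul_coordChar_false (p : ℝ) :
    (1 - p) * coordChar p false = -√(p * (1 - p)) := by
  linarith [coordChar_mean p, mul_coordChar_true p]

lemma chi_map_succEmb (p : ℝ) (S : Finset (Fin n)) (b : Bool) (x : Fin n → Bool) :
    chi p (S.map (Fin.succEmb n)) (Fin.cons b x) = chi p S x := by
  simp only [chi, prod_map, Fin.coe_succEmb, Fin.cons_succ]

lemma chi_insert_zero (p : ℝ) (S : Finset (Fin n)) (b : Bool) (x : Fin n → Bool) :
    chi p (insert 0 (S.map (Fin.succEmb n))) (Fin.cons b x) = coordChar p b * chi p S x := by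
  rw [chi_eq_prod_coordChar, prod_insert (zero_notMem_map_succEmb S), Fin.cons_zero,
    ← chi_eq_prod_coordChar, chi_map_succEmb]

lemma coeff_average (p : ℝ) (f : (Fin (n + 1) → Bool) → ℝ) (S : Finset (Fin n)) :
    coeff p (average p f) S =
      p * coeff p (slice true f) S + (1 - p) * coeff p (slice false f) S := by
  rw [average, coeff_add, coeff_smul, coeff_smul]

lemma coeff_slope (p : ℝ) (f : (Fin (n + 1) → Bool) → ℝ) (S : Finset (Fin n)) :
    coeff p (slope p f) S =
      √(p * (1 - p)) * (coeff p (slice true f) S - coeff p (slice false f) S) := by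
  rw [slope, coeff_smul, coeff_sub]

lemma coeff_map_succEmb (p : ℝ) (f : (Fin (n + 1) → Bool) → ℝ) (S : Finset (Fin n)) :
    coeff p f (S.map (Fin.succEmb n)) = coeff p (average p f) S := by
  have hslice (b : Bool) : slice b (fun x => f x * chi p (S.map (Fin.succEmb n)) x) =
      fun x => slice b f x * chi p S x := by
    ext x
    simp only [slice, chi_map_succEmb]
  rw [coeff_average, coeff, Ep_succ, hslice, hslice]
  rfl

lemma coeff_insert_zero (p : ℝ) (f : (Fin (n + 1) → Bool) → ℝ)
    (S : Finset (Fin n)) :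
    coeff p f (insert 0 (S.map (Fin.succEmb n))) = coeff p (slope p f) S := by
  have hslice (b : Bool) :
      slice b (fun x => f x * chi p (insert 0 (S.map (Fin.succEmb n))) x) =
        coordChar p b • fun x => slice b f x * chi p S x := by
    ext x
    simp only [slice, chi_insert_zero, Pi.smul_apply, smul_eq_mul, mul_left_comm]
  rw [coeff_slope, coeff, Ep_succ, hslice, hslice, Ep_smul, Ep_smul, ← mul_assoc, ← mul_assoc,
    mul_coordChar_true, one_sub_mul_coordChar_false]
  simp only [coeff]
  ring

lemma coeff_average_sq_add_coeff_slope_sq (hp₀ : 0 ≤ p) (hp₁ : p ≤ 1)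
    (f : (Fin (n + 1) → Bool) → ℝ) (S : Finset (Fin n)) :
    coeff p (average p f) S ^ 2 + coeff p (slope p f) S ^ 2 =
      p * coeff p (slice true f) S ^ 2 + (1 - p) * coeff p (slice false f) S ^ 2 := by
  rw [coeff_average, coeff_slope, mul_pow, Real.sq_sqrt (mul_nonneg hp₀ (sub_nonneg.2 hp₁))]
  ring

lemma noise_cons (p ρ : ℝ) (f : (Fin (n + 1) → Bool) → ℝ) (b : Bool) (x : Fin n → Bool) :
    noise p ρ f (Fin.cons b x) =
      noise p ρ (average p f) x + ρ * coordChar p b * noise p ρ (slope p f) x := by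
  simp only [noise, sum_finset_fin_succ, card_map, card_insert_zero_map_succEmb,
    coeff_map_succEmb, coeff_insert_zero, chi_map_succEmb, chi_insert_zero, mul_sum]
  congr 1
  exact sum_congr rfl fun S _ => by ring

lemma genInf_map_succEmb (p : ℝ) (f : (Fin (n + 1) → Bool) → ℝ) (S : Finset (Fin n)) :
    genInf p (S.map (Fin.succEmb n)) f = genInf p S (average p f) + genInf p S (slope p f) := by
  simp only [genInf, sum_filter, sum_finset_fin_succ, card_map, map_subset_map,
    map_succEmb_subset_insert_zero, coeff_map_succEmb, coeff_insert_zero, add_div]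

lemma genInf_insert_zero (p : ℝ) (f : (Fin (n + 1) → Bool) → ℝ) (S : Finset (Fin n)) :
    genInf p (insert 0 (S.map (Fin.succEmb n))) f = genInf p S (slope p f) / (p * (1 - p)) := by
  have hnot (T : Finset (Fin n)) :
      ¬insert 0 (S.map (Fin.succEmb n)) ⊆ T.map (Fin.succEmb n) := fun h =>
    zero_notMem_map_succEmb T (h (mem_insert_self _ _))
  simp only [genInf, sum_filter, sum_finset_fin_succ, hnot, if_false, sum_const_zero, zero_add,
    insert_zero_map_succEmb_subset, coeff_insert_zero, card_insert_zero_map_succEmb, pow_succ,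
    div_mul_eq_div_div]

lemma slice_restrict1_map_succEmb (S : Finset (Fin n)) (b : Bool) (f : (Fin (n + 1) → Bool) → ℝ) :
    slice b (restrict1 (S.map (Fin.succEmb n)) f) = restrict1 S (slice b f) := by
  ext x
  refine congrArg f (funext fun i => ?_)
  cases i using Fin.cases <;> simp

lemma slice_restrict1_insert_zero (S : Finset (Fin n)) (b : Bool) (f : (Fin (n + 1) → Bool) → ℝ) :
    slice b (restrict1 (insert 0 (S.map (Fin.succEmb n))) f) = restrict1 S (slice true f) := by
  ext x
  refine congrArg f (funext fun i => ?_)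
  cases i using Fin.cases <;> simp

end FirstCoordinate

/-! ### Hypercontractivity for generalised influences -/

section Hypercontractivity

variable {p : ℝ}

/-- Only the terms linear in `t` survive with a sign, so that they vanish for mean-zero `t`; the
cross terms of higher order are absorbed by the three squares through AM-GM. -/
lemma sq_mul_sq_le_of_sq_le {t κ : ℝ} (ht : t ^ 2 ≤ κ) (a b c d : ℝ) :
    (a + t * b) ^ 2 * (c + t * d) ^ 2 ≤
      a ^ 2 * c ^ 2 + t * (2 * (a * b * c ^ 2 + a ^ 2 * c * d)) +
        t ^ 2 * (4 * (a ^ 2 * d ^ 2 + b ^ 2 * c ^ 2) + 3 * κ * (b ^ 2 * d ^ 2)) := by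
  have hquartic : t ^ 2 * (t ^ 2 * (b ^ 2 * d ^ 2)) ≤ t ^ 2 * (κ * (b ^ 2 * d ^ 2)) := by gcongr
  nlinarith only [hquartic, mul_nonneg (sq_nonneg t) (sq_nonneg (a * d - b * c)),
    mul_nonneg (sq_nonneg t) (sq_nonneg (a * d - t * b * d)),
    mul_nonneg (sq_nonneg t) (sq_nonneg (b * c - t * b * d))]

lemma two_point_sq_mul_sq_le (hp₀ : 0 < p) (hp₁ : p < 1) {ρ : ℝ} (hρ : ρ ^ 2 ≤ 1 / 4)
    (a b c d : ℝ) :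
    p * ((a + ρ * coordChar p true * b) ^ 2 * (c + ρ * coordChar p true * d) ^ 2) +
        (1 - p) * ((a + ρ * coordChar p false * b) ^ 2 * (c + ρ * coordChar p false * d) ^ 2) ≤
      a ^ 2 * c ^ 2 + a ^ 2 * d ^ 2 + b ^ 2 * c ^ 2 + b ^ 2 * d ^ 2 +
        b ^ 2 * d ^ 2 / (p * (1 - p)) := by
  set κ := 1 / (p * (1 - p)) with hκ
  have hpoint (e : Bool) := sq_mul_sq_le_of_sq_le (t := ρ * coordChar p e) (κ := 1 / 4 * κ)
    (by rw [mul_pow]; exact mul_le_mul hρ (coordChar_sq_le hp₀ hp₁ e) (sq_nonneg _) (by norm_num))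
    a b c d
  set A := 2 * (a * b * c ^ 2 + a ^ 2 * c * d)
  set B := 4 * (a ^ 2 * d ^ 2 + b ^ 2 * c ^ 2) + 3 * (1 / 4 * κ) * (b ^ 2 * d ^ 2) with hB
  have hκbd : 0 ≤ κ * (b ^ 2 * d ^ 2) := by
    rw [hκ]
    exact mul_nonneg (one_div_nonneg.2 (mul_pos hp₀ (sub_pos.2 hp₁)).le) (by positivity)
  have hB₀ : 0 ≤ B := by
    have hadbc : 0 ≤ a ^ 2 * d ^ 2 + b ^ 2 * c ^ 2 := by positivity
    linarith only [hB, hκbd, hadbc]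
  calc _ ≤ p * (a ^ 2 * c ^ 2 + ρ * coordChar p true * A + (ρ * coordChar p true) ^ 2 * B) +
        (1 - p) *
          (a ^ 2 * c ^ 2 + ρ * coordChar p false * A + (ρ * coordChar p false) ^ 2 * B) :=
      add_le_add (mul_le_mul_of_nonneg_left (hpoint true) hp₀.le)
        (mul_le_mul_of_nonneg_left (hpoint false) (sub_pos.2 hp₁).le)
    _ = a ^ 2 * c ^ 2 + ρ ^ 2 * B := by
      linear_combination ρ * A * coordChar_mean p + ρ ^ 2 * B * coordChar_variance hp₀ hp₁
    _ ≤ a ^ 2 * c ^ 2 + 1 / 4 * B := add_le_add_right (mul_le_mul_of_nonneg_right hρ hB₀) _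
    _ ≤ _ := by
      rw [hB, div_eq_mul_one_div (b ^ 2 * d ^ 2), ← hκ]
      nlinarith only [hκbd, mul_nonneg (sq_nonneg b) (sq_nonneg d)]

lemma noise_fin_zero (p ρ : ℝ) (f : (Fin 0 → Bool) → ℝ) : noise p ρ f = f := by
  ext x
  rw [noise, Fintype.sum_subsingleton _ ∅, coeff_empty, Ep_fin_zero, chi, prod_empty, card_empty,
    pow_zero, one_mul, mul_one, Subsingleton.elim x default]

lemma genInf_fin_zero (p : ℝ) (S : Finset (Fin 0)) (f : (Fin 0 → Bool) → ℝ) :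
    genInf p S f = f default ^ 2 := by
  rw [genInf, sum_filter, Fintype.sum_subsingleton _ ∅, if_pos (Subsingleton.elim S ∅).subset,
    coeff_empty, Ep_fin_zero, Subsingleton.elim S ∅, card_empty, pow_zero, div_one]

/-- The bilinear form, unlike its diagonal case `f = g`, is stable under induction on `n`. -/
lemma Ep_noise_sq_mul_noise_sq_le (hp₀ : 0 < p) (hp₁ : p < 1) {ρ : ℝ} (hρ : ρ ^ 2 ≤ 1 / 4)
    (f g : (Fin n → Bool) → ℝ) :
    Ep p (noise p ρ f ^ 2 * noise p ρ g ^ 2) ≤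
      ∑ S, (p * (1 - p)) ^ #S * (genInf p S f * genInf p S g) := by
  induction n with
  | zero =>
    rw [Fintype.sum_subsingleton _ ∅, card_empty, pow_zero, one_mul]
    simp only [Ep_fin_zero, noise_fin_zero, genInf_fin_zero, Pi.mul_apply, Pi.pow_apply, le_refl]
  | succ n ih =>
    have hσ : p * (1 - p) ≠ 0 := (mul_pos hp₀ (sub_pos.2 hp₁)).ne'
    set A := noise p ρ (average p f)
    set B := noise p ρ (slope p f)
    set C := noise p ρ (average p g)
    set D := noise p ρ (slope p g)
    calc Ep p (noise p ρ f ^ 2 * noise p ρ g ^ 2)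
        ≤ Ep p (A ^ 2 * C ^ 2 + A ^ 2 * D ^ 2 + B ^ 2 * C ^ 2 + B ^ 2 * D ^ 2 +
            (p * (1 - p))⁻¹ • (B ^ 2 * D ^ 2)) := by
          rw [Ep_succ, ← Ep_smul, ← Ep_smul, ← Ep_add]
          refine Ep_mono hp₀.le hp₁.le fun x => ?_
          have h := two_point_sq_mul_sq_le hp₀ hp₁ hρ (A x) (B x) (C x) (D x)
          rw [div_eq_inv_mul] at h
          simpa only [slice, Pi.add_apply, Pi.smul_apply, Pi.mul_apply, Pi.pow_apply, smul_eq_mul,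
            noise_cons] using h
      _ = Ep p (A ^ 2 * C ^ 2) + Ep p (A ^ 2 * D ^ 2) + Ep p (B ^ 2 * C ^ 2) +
            Ep p (B ^ 2 * D ^ 2) + (p * (1 - p))⁻¹ * Ep p (B ^ 2 * D ^ 2) := by
          simp only [Ep_add, Ep_smul]
      _ ≤ _ := add_le_add (add_le_add (add_le_add (add_le_add (ih _ _) (ih _ _)) (ih _ _))
            (ih _ _)) (mul_le_mul_of_nonneg_left (ih _ _)
              (inv_nonneg.2 (mul_pos hp₀ (sub_pos.2 hp₁)).le))
      _ = ∑ S, (p * (1 - p)) ^ #S * (genInf p S f * genInf p S g) := by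
          rw [sum_finset_fin_succ]
          simp only [genInf_map_succEmb, genInf_insert_zero, card_map,
            card_insert_zero_map_succEmb, mul_sum, ← sum_add_distrib]
          refine sum_congr rfl fun S _ => ?_
          linear_combination (p * (1 - p)) ^ #S * genInf p S (slope p f) *
            genInf p S (slope p g) * (-(p * (1 - p))⁻¹ * mul_inv_cancel₀ hσ)

lemma genInf_mul_pow (hp₀ : 0 < p) (hp₁ : p < 1) (S : Finset (Fin n)) (f : (Fin n → Bool) → ℝ) :
    (p * (1 - p)) ^ #S * genInf p S f = ∑ T with S ⊆ T, coeff p f T ^ 2 :=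
  mul_div_cancel₀ _ (pow_pos (mul_pos hp₀ (sub_pos.2 hp₁)) _).ne'

lemma sum_pow_mul_genInf (hp₀ : 0 < p) (hp₁ : p < 1) (f : (Fin n → Bool) → ℝ) :
    ∑ S, (p * (1 - p)) ^ #S * genInf p S f = ∑ T, 2 ^ #T * coeff p f T ^ 2 := by
  simp only [genInf_mul_pow hp₀ hp₁, sum_filter]
  rw [sum_comm]
  refine sum_congr rfl fun T _ => ?_
  rw [← sum_filter, sum_const, filter_subset_univ, card_powerset, nsmul_eq_mul]
  norm_cast

lemma genInf_nonneg (hp₀ : 0 ≤ p) (hp₁ : p ≤ 1) (S : Finset (Fin n)) (f : (Fin n → Bool) → ℝ) :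
    0 ≤ genInf p S f :=
  div_nonneg (sum_nonneg fun _ _ => sq_nonneg _) (pow_nonneg (mul_nonneg hp₀ (sub_nonneg.2 hp₁)) _)

lemma genInf_le_mul_genInf (hp₀ : 0 ≤ p) (hp₁ : p ≤ 1) {S : Finset (Fin n)} {c : ℝ}
    {f g : (Fin n → Bool) → ℝ} (h : ∀ T, S ⊆ T → coeff p f T ^ 2 ≤ c * coeff p g T ^ 2) :
    genInf p S f ≤ c * genInf p S g := by
  rw [genInf, genInf, ← mul_div_assoc, mul_sum]
  exact div_le_div_of_nonneg_right (sum_le_sum fun T hT => h T (mem_filter.1 hT).2)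
    (pow_nonneg (mul_nonneg hp₀ (sub_nonneg.2 hp₁)) _)

lemma genInf_average_add_genInf_slope (hp₀ : 0 ≤ p) (hp₁ : p ≤ 1) (S : Finset (Fin n))
    (f : (Fin (n + 1) → Bool) → ℝ) :
    genInf p S (average p f) + genInf p S (slope p f) =
      p * genInf p S (slice true f) + (1 - p) * genInf p S (slice false f) := by
  simp only [genInf, ← add_div, ← mul_div_assoc, ← sum_add_distrib, mul_sum,
    coeff_average_sq_add_coeff_slope_sq hp₀ hp₁]

lemma genInf_smul (p a : ℝ) (S : Finset (Fin n)) (f : (Fin n → Bool) → ℝ) :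
    genInf p S (a • f) = a ^ 2 * genInf p S f := by
  simp only [genInf, coeff_smul, mul_pow, ← mul_sum, mul_div_assoc]

/-- The growth factor `4` per coordinate comes from `|f(1, ·) - f(0, ·)| ≤ 2 g(1, ·)`. -/
lemma genInf_le_of_abs_le_mono (hp₀ : 0 < p) (hp₁ : p < 1) {f g : (Fin n → Bool) → ℝ}
    (hg : Mono g) (hfg : ∀ x, |f x| ≤ g x) (S : Finset (Fin n)) :
    genInf p S f ≤ 4 ^ #S * Ep p (restrict1 S (g ^ 2)) := by
  induction n with
  | zero =>
    have hpoint (x : Fin 0 → Bool) : x = default := Subsingleton.elim _ _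
    rw [genInf_fin_zero, Ep_fin_zero, restrict1, Subsingleton.elim S ∅, card_empty, pow_zero,
      one_mul, hpoint fun _ => _]
    exact sq_le_sq.2 ((hfg _).trans (le_abs_self _))
  | succ n ih =>
    obtain ⟨S, rfl | rfl⟩ := finset_fin_succ_cases S
    · rw [genInf_map_succEmb, genInf_average_add_genInf_slope hp₀.le hp₁.le, Ep_succ, card_map,
        slice_restrict1_map_succEmb, slice_restrict1_map_succEmb]
      calc _ ≤ p * (4 ^ #S * Ep p (restrict1 S (slice true g ^ 2))) +
            (1 - p) * (4 ^ #S * Ep p (restrict1 S (slice false g ^ 2))) :=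
          add_le_add
            (mul_le_mul_of_nonneg_left (ih (mono_slice hg true) (fun _ => hfg _) S) hp₀.le)
            (mul_le_mul_of_nonneg_left (ih (mono_slice hg false) (fun _ => hfg _) S)
              (sub_pos.2 hp₁).le)
        _ = 4 ^ #S * (p * Ep p (restrict1 S (slice true g ^ 2)) +
            (1 - p) * Ep p (restrict1 S (slice false g ^ 2))) := by ring
    · have hσ : 0 < p * (1 - p) := mul_pos hp₀ (sub_pos.2 hp₁)
      have hdiff (x) : |(slice true f - slice false f) x| ≤ ((2 : ℝ) • slice true g) x := by
        calc _ ≤ |slice true f x| + |slice false f x| := abs_sub _ _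
          _ ≤ slice true g x + slice true g x :=
            add_le_add (hfg _) ((hfg _).trans (hg.slice_false_le_slice_true x))
          _ = _ := (two_mul _).symm
      have hmono : Mono ((2 : ℝ) • slice true g) := fun x y hxy =>
        mul_le_mul_of_nonneg_left (mono_slice hg true x y hxy) zero_le_two
      rw [genInf_insert_zero, slope, genInf_smul, Real.sq_sqrt hσ.le, mul_div_cancel_left₀ _ hσ.ne',
        Ep_succ, card_insert_zero_map_succEmb, slice_restrict1_insert_zero,
        slice_restrict1_insert_zero]
      calc _ ≤ 4 ^ #S * Ep p (restrict1 S (((2 : ℝ) • slice true g) ^ 2)) := ih hmono hdiff S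
        _ = 4 ^ #S * ((2 : ℝ) ^ 2 * Ep p (restrict1 S (slice true g ^ 2))) := by
          rw [smul_pow, ← Ep_smul _ (2 ^ 2)]
          rfl
        _ = 4 ^ (#S + 1) * (p * Ep p (restrict1 S (slice true g ^ 2)) +
            (1 - p) * Ep p (restrict1 S (slice true g ^ 2))) := by ring

end Hypercontractivity

/-! ### The level inequality -/

section LevelInequality

variable {p : ℝ} {d : ℕ} {f : (Fin n → Bool) → ℝ}

/-- The Fourier weight of `f` on levels at most `d`, i.e. `‖f^{≤ d}‖₂²`. -/
noncomputable def lowWeight (p : ℝ) (d : ℕ) (f : (Fin n → Bool) → ℝ) : ℝ :=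
  ∑ S with #S ≤ d, coeff p f S ^ 2

lemma lowWeight_nonneg (p : ℝ) (d : ℕ) (f : (Fin n → Bool) → ℝ) : 0 ≤ lowWeight p d f :=
  sum_nonneg fun _ _ => sq_nonneg _

lemma lowWeight_zero (p : ℝ) (f : (Fin n → Bool) → ℝ) : lowWeight p 0 f = Ep p f ^ 2 := by
  simp only [lowWeight, nonpos_iff_eq_zero, card_eq_zero, filter_eq', mem_univ, if_true,
    sum_singleton, coeff_empty]

lemma Ep_mul_trunc (hp₀ : 0 < p) (hp₁ : p < 1) (d : ℕ) (f : (Fin n → Bool) → ℝ) :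
    Ep p (f * trunc p d f) = lowWeight p d f := by
  simp only [parseval hp₀ hp₁, coeff_trunc hp₀ hp₁, mul_ite, mul_zero, ← sq, lowWeight, sum_filter]

lemma coeff_noise_two_trunc_sq_le (hp₀ : 0 < p) (hp₁ : p < 1) (S : Finset (Fin n)) :
    coeff p (noise p 2 (trunc p d f)) S ^ 2 ≤ if #S ≤ d then 4 ^ d * coeff p f S ^ 2 else 0 := by
  rw [coeff_noise hp₀ hp₁, coeff_trunc hp₀ hp₁]
  split_ifs with hS
  · rw [mul_pow, ← pow_mul, mul_comm #S, pow_mul]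
    norm_num only
    gcongr
    norm_num
  · rw [mul_zero, sq, mul_zero]

lemma genInf_noise_two_trunc_le (hp₀ : 0 < p) (hp₁ : p < 1) {B : ℝ} (hB₀ : 0 ≤ B)
    (hB : ∀ S, #S ≤ d → genInf p S f ≤ B) (S : Finset (Fin n)) :
    genInf p S (noise p 2 (trunc p d f)) ≤ 4 ^ d * B := by
  have hcoeff (T : Finset (Fin n)) := coeff_noise_two_trunc_sq_le (d := d) (f := f) hp₀ hp₁ T
  by_cases hS : #S ≤ d
  · calc _ ≤ 4 ^ d * genInf p S f := genInf_le_mul_genInf hp₀.le hp₁.le fun T _ =>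
        (hcoeff T).trans (by split_ifs; exacts [le_rfl, by positivity])
      _ ≤ 4 ^ d * B := by gcongr; exact hB S hS
  · calc _ ≤ 0 * genInf p S f := genInf_le_mul_genInf hp₀.le hp₁.le fun T hT =>
        (hcoeff T).trans (by
          rw [if_neg fun hTd => hS ((card_le_card hT).trans hTd), zero_mul])
      _ ≤ 4 ^ d * B := by rw [zero_mul]; positivity

lemma sum_two_pow_mul_coeff_noise_two_trunc_sq_le (hp₀ : 0 < p) (hp₁ : p < 1) :
    ∑ T, 2 ^ #T * coeff p (noise p 2 (trunc p d f)) T ^ 2 ≤ 8 ^ d * lowWeight p d f := by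
  rw [lowWeight, sum_filter, mul_sum]
  refine sum_le_sum fun T _ => (mul_le_mul_of_nonneg_left
    (coeff_noise_two_trunc_sq_le hp₀ hp₁ T) (by positivity)).trans ?_
  split_ifs with hT
  · calc (2 : ℝ) ^ #T * (4 ^ d * coeff p f T ^ 2) ≤ 2 ^ d * (4 ^ d * coeff p f T ^ 2) := by
          gcongr
          norm_num
      _ = 8 ^ d * coeff p f T ^ 2 := by
          rw [← mul_assoc, ← mul_pow]
          norm_num
  · simp only [mul_zero, le_refl]

lemma Ep_trunc_pow_four_le (hp₀ : 0 < p) (hp₁ : p < 1) {B : ℝ}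
    (hB : ∀ S, #S ≤ d → genInf p S f ≤ B) :
    Ep p (trunc p d f ^ 4) ≤ 32 ^ d * B * lowWeight p d f := by
  have hB₀ : 0 ≤ B := (genInf_nonneg hp₀.le hp₁.le ∅ f).trans (hB ∅ (by simp))
  have hσ : 0 < p * (1 - p) := mul_pos hp₀ (sub_pos.2 hp₁)
  set h := noise p 2 (trunc p d f)
  have htrunc : noise p 2⁻¹ h = trunc p d f := by
    simpa only [inv_inv] using noise_noise_inv hp₀ hp₁ (inv_ne_zero two_ne_zero) (trunc p d f)
  calc Ep p (trunc p d f ^ 4) = Ep p (noise p 2⁻¹ h ^ 2 * noise p 2⁻¹ h ^ 2) := by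
        rw [htrunc, ← pow_add]
    _ ≤ ∑ S, (p * (1 - p)) ^ #S * (genInf p S h * genInf p S h) :=
        Ep_noise_sq_mul_noise_sq_le hp₀ hp₁ (by norm_num) h h
    _ ≤ ∑ S, (p * (1 - p)) ^ #S * (4 ^ d * B * genInf p S h) :=
        sum_le_sum fun S _ => mul_le_mul_of_nonneg_left
          (mul_le_mul_of_nonneg_right (genInf_noise_two_trunc_le hp₀ hp₁ hB₀ hB S)
            (genInf_nonneg hp₀.le hp₁.le S h)) (pow_nonneg hσ.le _)
    _ = 4 ^ d * B * ∑ T, 2 ^ #T * coeff p h T ^ 2 := by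
        simp only [← sum_pow_mul_genInf hp₀ hp₁, mul_sum, mul_left_comm]
    _ ≤ 4 ^ d * B * (8 ^ d * lowWeight p d f) := by
        gcongr
        exact sum_two_pow_mul_coeff_noise_two_trunc_sq_le hp₀ hp₁
    _ = 32 ^ d * B * lowWeight p d f := by
        rw [show (32 : ℝ) = 4 * 8 by norm_num, mul_pow]
        ring

lemma IsBoolean.genInf_le (hf : IsBoolean f) (hm : Mono f) (hp₀ : 0 < p) (hp₁ : p < 1)
    (S : Finset (Fin n)) : genInf p S f ≤ 4 ^ #S * Ep p (restrict1 S f) := by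
  have h := genInf_le_of_abs_le_mono hp₀ hp₁ hm (fun x => (abs_of_nonneg (hf.nonneg x)).le) S
  rwa [hf.sq_eq] at h

lemma lowWeight_pow_three_le (hf : IsBoolean f) (hm : Mono f) (hp₀ : 0 < p) (hp₁ : p < 1) {β : ℝ}
    (hβ : ∀ S : Finset (Fin n), #S ≤ d → Ep p (restrict1 S f) ≤ β) :
    lowWeight p d f ^ 3 ≤ Ep p f ^ 3 * (128 ^ d * β) := by
  have hμ : 0 ≤ Ep p f := Ep_nonneg hp₀.le hp₁.le hf.nonneg
  have hβ₀ : 0 ≤ β :=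
    (Ep_nonneg hp₀.le hp₁.le fun _ => hf.nonneg _).trans (hβ ∅ (by simp))
  have hgenInf (S : Finset (Fin n)) (hS : #S ≤ d) : genInf p S f ≤ 4 ^ d * β :=
    (hf.genInf_le hm hp₀ hp₁ S).trans <|
      mul_le_mul (pow_le_pow_right₀ (by norm_num) hS) (hβ S hS)
        (Ep_nonneg hp₀.le hp₁.le fun _ => hf.nonneg _) (by positivity)
  have hfour : lowWeight p d f ^ 4 ≤ Ep p f ^ 3 * (128 ^ d * β) * lowWeight p d f := by
    calc lowWeight p d f ^ 4 = Ep p (f * trunc p d f) ^ 4 := by rw [Ep_mul_trunc hp₀ hp₁]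
      _ ≤ Ep p f ^ 3 * Ep p (trunc p d f ^ 4) := hf.Ep_mul_pow_four_le hp₀.le hp₁.le _
      _ ≤ Ep p f ^ 3 * (32 ^ d * (4 ^ d * β) * lowWeight p d f) := by
        gcongr
        exact Ep_trunc_pow_four_le hp₀ hp₁ hgenInf
      _ = Ep p f ^ 3 * (128 ^ d * β) * lowWeight p d f := by
        rw [show (128 : ℝ) = 32 * 4 by norm_num, mul_pow]
        ring
  rcases (lowWeight_nonneg p d f).eq_or_lt with hzero | hpos
  · rw [← hzero, zero_pow three_ne_zero]
    positivity
  · exact le_of_mul_le_mul_right (by rwa [← pow_succ]) hpos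

lemma eight_mul_pow_mul_rpow_le_one {μ ε : ℝ} (hμ : 0 < μ) (hd : d ≠ 0)
    (hdε : (d : ℝ) ≤ ε / 10 * -Real.log μ) : 8 * (128 ^ d * μ ^ ε) ≤ 1 := by
  have htwo : (2 : ℝ) ≤ Real.exp 1 := by linarith only [Real.add_one_le_exp 1]
  calc (8 : ℝ) * (128 ^ d * μ ^ ε) ≤ 8 ^ d * (128 ^ d * μ ^ ε) := by
        gcongr
        exact le_self_pow₀ (by norm_num) hd
    _ = (2 ^ 10) ^ d * μ ^ ε := by
        rw [← mul_assoc, ← mul_pow]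
        norm_num
    _ ≤ (Real.exp 1 ^ 10) ^ d * μ ^ ε := by gcongr
    _ = Real.exp (10 * d + ε * Real.log μ) := by
        rw [← Real.exp_nat_mul, ← Real.exp_nat_mul, Real.rpow_def_of_pos hμ, ← Real.exp_add]
        ring_nf
    _ ≤ 1 := Real.exp_le_one_iff.2 (by linarith only [hdε])

/-- The property `μ_p(f_{J→1}) ≤ μ_p(f)^ε` for all `|J| ≤ M`. For a family of biases
`x ∈ [p, q]` and `ε = 0.01` this is what being `M`-global in `[p, q]` means. -/
def IsPowGlobal (p M ε : ℝ) (f : (Fin n → Bool) → ℝ) : Prop :=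
  ∀ J : Finset (Fin n), (#J : ℝ) ≤ M → Ep p (restrict1 J f) ≤ Ep p f ^ ε

lemma lowWeight_le_half (hf : IsBoolean f) (hm : Mono f) (hp₀ : 0 < p) (hp₁ : p < 1) {ε : ℝ}
    (hμ₀ : 0 < Ep p f) (hμ : Ep p f ≤ 1 / 2) (hd : (d : ℝ) ≤ ε / 10 * -Real.log (Ep p f))
    (hglobal : IsPowGlobal p d ε f) : lowWeight p d f ≤ Ep p f / 2 := by
  rcases eq_or_ne d 0 with rfl | hd₀
  · calc lowWeight p 0 f = Ep p f * Ep p f := by rw [lowWeight_zero, sq]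
      _ ≤ Ep p f * (1 / 2) := by gcongr
      _ = Ep p f / 2 := by ring
  · refine (pow_le_pow_iff_left₀ (lowWeight_nonneg p d f) (by positivity) three_ne_zero).1 ?_
    calc lowWeight p d f ^ 3 ≤ Ep p f ^ 3 * (128 ^ d * Ep p f ^ ε) :=
          lowWeight_pow_three_le hf hm hp₀ hp₁ fun S hS => hglobal S (by exact_mod_cast hS)
      _ ≤ Ep p f ^ 3 * (1 / 8) := by
          gcongr
          linarith only [eight_mul_pow_mul_rpow_le_one hμ₀ hd₀ hd]
      _ = (Ep p f / 2) ^ 3 := by ring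

lemma succ_mul_sub_lowWeight_le (hp₀ : 0 < p) (hp₁ : p < 1) (d : ℕ) (f : (Fin n → Bool) → ℝ) :
    (d + 1) * (Ep p (f ^ 2) - lowWeight p d f) ≤ ∑ S, (#S : ℝ) * coeff p f S ^ 2 := by
  rw [sq f, parseval hp₀ hp₁, lowWeight, sum_filter, ← sum_sub_distrib, mul_sum]
  refine sum_le_sum fun S _ => ?_
  split_ifs with hS
  · rw [sq, sub_self, mul_zero]
    exact mul_nonneg (Nat.cast_nonneg _) (mul_self_nonneg _)
  · rw [sub_zero, ← sq]
    gcongr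
    exact_mod_cast not_le.1 hS

end LevelInequality

/-! ### Russo's formula and the isoperimetric inequality -/

section Isoperimetry

variable {p : ℝ}

lemma IsBoolean.totalInf_succ {f : (Fin (n + 1) → Bool) → ℝ} (hf : IsBoolean f) (p : ℝ) :
    totalInf p f = Ep p ((slice true f - slice false f) ^ 2) +
      (p * totalInf p (slice true f) + (1 - p) * totalInf p (slice false f)) := by
  have hzero (b : Bool) :
      slice b (fun x => if f (Function.update x 0 (!x 0)) = f x then (0 : ℝ) else 1) =
        (slice true f - slice false f) ^ 2 := by
    ext x
    simp only [slice, Fin.cons_zero, Fin.update_cons_zero, Pi.pow_apply, Pi.sub_apply]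
    rcases hf (Fin.cons true x) with h | h <;> rcases hf (Fin.cons false x) with h' | h' <;>
      cases b <;> simp [h, h']
  have hsucc (b : Bool) (i : Fin n) :
      slice b (fun x => if f (Function.update x i.succ (!x i.succ)) = f x then (0 : ℝ) else 1) =
        fun x => if slice b f (Function.update x i (!x i)) = slice b f x then 0 else 1 := by
    ext x
    simp only [slice, Fin.cons_succ, Fin.cons_update]
  simp only [totalInf, Fin.sum_univ_succ, Ep_succ, hzero, hsucc, sum_add_distrib, mul_sum]
  ring

lemma totalInf_nonneg (hp₀ : 0 ≤ p) (hp₁ : p ≤ 1) (f : (Fin n → Bool) → ℝ) :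
    0 ≤ totalInf p f :=
  sum_nonneg fun i _ => Ep_nonneg hp₀ hp₁ fun x => by split_ifs <;> norm_num

lemma isBoolean_slice_sub_slice {f : (Fin (n + 1) → Bool) → ℝ} (hf : IsBoolean f) (hm : Mono f) :
    IsBoolean (slice true f - slice false f) := fun x => by
  have hle := hm.slice_false_le_slice_true x
  rw [Pi.sub_apply]
  rcases isBoolean_slice hf true x with h | h <;> rcases isBoolean_slice hf false x with h' | h' <;>
    rw [h, h'] at hle ⊢ <;> norm_num at hle <;> norm_num

lemma hasDerivAt_Ep {f : (Fin n → Bool) → ℝ} (hf : IsBoolean f) (hm : Mono f) (p : ℝ) :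
    HasDerivAt (fun x => Ep x f) (totalInf p f) p := by
  induction n with
  | zero =>
    simp only [Ep_fin_zero, totalInf, univ_eq_empty, sum_empty]
    exact hasDerivAt_const _ _
  | succ n ih =>
    have htrue := ih (isBoolean_slice hf true) (mono_slice hm true)
    have hfalse := ih (isBoolean_slice hf false) (mono_slice hm false)
    simp only [Ep_succ]
    refine (((hasDerivAt_id' p).fun_mul htrue).fun_add
      (((hasDerivAt_id' p).const_sub 1).fun_mul hfalse)).congr_deriv ?_
    rw [hf.totalInf_succ, (isBoolean_slice_sub_slice hf hm).sq_eq, Ep_sub]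
    ring

lemma IsBoolean.sum_card_mul_coeff_sq {f : (Fin n → Bool) → ℝ} (hf : IsBoolean f) (hp₀ : 0 < p)
    (hp₁ : p < 1) : ∑ S, (#S : ℝ) * coeff p f S ^ 2 = p * (1 - p) * totalInf p f := by
  induction n with
  | zero =>
    rw [Fintype.sum_subsingleton _ ∅, card_empty, totalInf, univ_eq_empty, sum_empty, Nat.cast_zero,
      zero_mul, mul_zero]
  | succ n ih =>
    have hslope : ∑ S, coeff p (slope p f) S ^ 2 =
        p * (1 - p) * Ep p ((slice true f - slice false f) ^ 2) := by
      simp only [slope, coeff_smul, mul_pow, Real.sq_sqrt (mul_pos hp₀ (sub_pos.2 hp₁)).le,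
        ← mul_sum]
      rw [sq (slice true f - slice false f), parseval hp₀ hp₁]
      simp only [sq]
    calc ∑ S, (#S : ℝ) * coeff p f S ^ 2
        = ∑ S : Finset (Fin n), (#S : ℝ) *
            (coeff p (average p f) S ^ 2 + coeff p (slope p f) S ^ 2) +
          ∑ S, coeff p (slope p f) S ^ 2 := by
          rw [sum_finset_fin_succ, ← sum_add_distrib, ← sum_add_distrib]
          refine sum_congr rfl fun S _ => ?_
          rw [card_map, card_insert_zero_map_succEmb, coeff_map_succEmb, coeff_insert_zero]
          push_cast
          ring
      _ = p * ∑ S, (#S : ℝ) * coeff p (slice true f) S ^ 2 +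
          (1 - p) * ∑ S, (#S : ℝ) * coeff p (slice false f) S ^ 2 +
          ∑ S, coeff p (slope p f) S ^ 2 := by
          simp only [coeff_average_sq_add_coeff_slope_sq hp₀.le hp₁.le, mul_add, sum_add_distrib,
            mul_sum, mul_left_comm]
      _ = p * (1 - p) * totalInf p f := by
          rw [ih (isBoolean_slice hf true), ih (isBoolean_slice hf false), hslope,
            hf.totalInf_succ]
          ring

lemma negMulLog_le_totalInf {f : (Fin n → Bool) → ℝ} (hf : IsBoolean f) (hm : Mono f)
    (hp₀ : 0 < p) (hp₁ : p < 1) {ε : ℝ} (hε : 0 ≤ ε) (hμ₀ : 0 < Ep p f) (hμ : Ep p f ≤ 1 / 2)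
    (hglobal : IsPowGlobal p (ε / 10 * -Real.log (Ep p f)) ε f) :
    ε / 20 * Real.negMulLog (Ep p f) ≤ p * (1 - p) * totalInf p f := by
  have hlog : 0 ≤ -Real.log (Ep p f) := neg_nonneg.2 (Real.log_nonpos hμ₀.le (by linarith))
  set r := ε / 10 * -Real.log (Ep p f) with hr
  have hr₀ : 0 ≤ r := by positivity
  have hfloor : (⌊r⌋₊ : ℝ) ≤ r := Nat.floor_le hr₀
  have hhalf : lowWeight p ⌊r⌋₊ f ≤ Ep p f / 2 :=
    lowWeight_le_half hf hm hp₀ hp₁ hμ₀ hμ hfloor fun J hJ => hglobal J (hJ.trans hfloor)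
  calc ε / 20 * Real.negMulLog (Ep p f) = r * (Ep p f / 2) := by
        rw [hr, Real.negMulLog]
        ring
    _ ≤ (⌊r⌋₊ + 1) * (Ep p f - lowWeight p ⌊r⌋₊ f) :=
        mul_le_mul (Nat.lt_floor_add_one r).le (by linarith) (by positivity) (by positivity)
    _ ≤ ∑ S, (#S : ℝ) * coeff p f S ^ 2 := by
        simpa only [hf.sq_eq] using succ_mul_sub_lowWeight_le hp₀ hp₁ ⌊r⌋₊ f
    _ = p * (1 - p) * totalInf p f := hf.sum_card_mul_coeff_sq hp₀ hp₁

end Isoperimetry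

/-! ### The sharp threshold -/

section SharpThreshold

lemma antitoneOn_rpow_mul_neg_log {φ φ' : ℝ → ℝ} {a b c : ℝ} (ha : 0 < a)
    (hφ : ∀ x ∈ Set.Icc a b, HasDerivAt φ (φ' x) x) (hpos : ∀ x ∈ Set.Icc a b, 0 < φ x)
    (hineq : ∀ x ∈ Set.Icc a b, c * Real.negMulLog (φ x) ≤ x * φ' x) :
    AntitoneOn (fun x => x ^ c * -Real.log (φ x)) (Set.Icc a b) := by
  have hderiv (x) (hx : x ∈ Set.Icc a b) : HasDerivAt (fun x => x ^ c * -Real.log (φ x))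
      (x ^ c / (x * φ x) * (c * Real.negMulLog (φ x) - x * φ' x)) x := by
    have hx₀ : 0 < x := ha.trans_le hx.1
    have hφx : φ x ≠ 0 := (hpos x hx).ne'
    refine ((Real.hasDerivAt_rpow_const (p := c) (Or.inl hx₀.ne')).fun_mul
      ((hφ x hx).log hφx).fun_neg).congr_deriv ?_
    rw [Real.rpow_sub_one hx₀.ne', Real.negMulLog]
    field_simp
    ring
  refine antitoneOn_of_hasDerivWithinAt_nonpos (convex_Icc a b)
    (fun x hx => (hderiv x hx).continuousAt.continuousWithinAt)
    (fun x hx => (hderiv x (interior_subset hx)).hasDerivWithinAt) fun x hx => ?_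
  have hx' := interior_subset hx
  have hx₀ : 0 < x := ha.trans_le hx'.1
  exact mul_nonpos_of_nonneg_of_nonpos
    (div_nonneg (Real.rpow_nonneg hx₀.le c) (mul_pos hx₀ (hpos x hx')).le)
    (sub_nonpos.2 (hineq x hx'))

variable {f : (Fin n → Bool) → ℝ} {p q ε : ℝ}

lemma neg_log_Ep_le (hf : IsBoolean f) (hm : Mono f) (hp : 0 < p) (hpq : p ≤ q) (hq : q < 1)
    (hε : 0 ≤ ε) (hμp : 0 < Ep p f) (hμq : Ep q f ≤ 1 / 2)
    (hglobal : ∀ x ∈ Set.Icc p q, IsPowGlobal x (ε / 10 * -Real.log (Ep p f)) ε f) :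
    -Real.log (Ep q f) ≤ (p / q) ^ (ε / 20) * -Real.log (Ep p f) := by
  have hmono (x) (hx : x ∈ Set.Icc p q) : Ep p f ≤ Ep x f :=
    hm.Ep_le_Ep hp.le hx.1 (hx.2.trans hq.le)
  have hpos (x) (hx : x ∈ Set.Icc p q) : 0 < Ep x f := hμp.trans_le (hmono x hx)
  have hiso (x) (hx : x ∈ Set.Icc p q) :
      ε / 20 * Real.negMulLog (Ep x f) ≤ x * totalInf x f := by
    have hx₀ : 0 < x := hp.trans_le hx.1
    have hx₁ : x < 1 := hx.2.trans_lt hq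
    have hglobal' : IsPowGlobal x (ε / 10 * -Real.log (Ep x f)) ε f := fun J hJ =>
      hglobal x hx J <| hJ.trans <| mul_le_mul_of_nonneg_left
        (neg_le_neg (Real.log_le_log hμp (hmono x hx))) (by positivity)
    calc ε / 20 * Real.negMulLog (Ep x f) ≤ x * (1 - x) * totalInf x f :=
          negMulLog_le_totalInf hf hm hx₀ hx₁ hε (hpos x hx)
            ((hm.Ep_le_Ep hx₀.le hx.2 hq.le).trans hμq) hglobal'
      _ ≤ x * totalInf x f := by
          gcongr
          · exact totalInf_nonneg hx₀.le hx₁.le f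
          · exact mul_le_of_le_one_right hx₀.le (by linarith)
  have hq₀ : 0 < q := hp.trans_le hpq
  rw [Real.div_rpow hp.le hq₀.le, div_mul_eq_mul_div, le_div_iff₀ (Real.rpow_pos_of_pos hq₀ _),
    mul_comm]
  exact antitoneOn_rpow_mul_neg_log hp (fun x _ => hasDerivAt_Ep hf hm x) hpos hiso
    (Set.left_mem_Icc.2 hpq) (Set.right_mem_Icc.2 hpq) hpq

lemma le_rpow_mul_of_one_le_div_rpow_mul {C M : ℝ} (hp : 0 < p) (hq : 0 < q) (hC : 0 < C)
    (hM : 0 ≤ M) (h : 1 ≤ (p / q) ^ (1 / C) * M) : q ≤ M ^ C * p := by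
  have hr : 0 ≤ p / q := (div_pos hp hq).le
  have hpow : 1 ≤ p / q * M ^ C := by
    calc (1 : ℝ) ≤ ((p / q) ^ (1 / C) * M) ^ C := Real.one_le_rpow h hC.le
      _ = p / q * M ^ C := by
        rw [Real.mul_rpow (Real.rpow_nonneg hr _) hM, ← Real.rpow_mul hr,
          one_div_mul_cancel hC.ne', Real.rpow_one]
  rwa [div_mul_eq_mul_div, one_le_div hq, mul_comm] at hpow

lemma half_lt_neg_log {μ : ℝ} (hμ₀ : 0 < μ) (hμ : μ ≤ 1 / 2) : 1 / 2 < -Real.log μ := by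
  have hlog := Real.log_le_log hμ₀ hμ
  rw [one_div, Real.log_inv] at hlog
  linarith only [hlog, Real.log_two_gt_d9]

end SharpThreshold

theorem statement14_general {ε : ℝ} (hε₀ : 0 < ε) (hε₁ : ε ≤ 1) :
    ∃ C : ℝ, 1 ≤ C ∧
      ∀ (n : ℕ) (p q M : ℝ) (f : (Fin n → Bool) → ℝ),
        IsBoolean f → Mono f → 0 < p → p ≤ q → q < 1 →
        (∀ x, p ≤ x → x ≤ q → IsPowGlobal x M ε f) →
        Ep q f ≤ 1 / 2 →
        Real.exp (-(M / C)) ≤ Ep p f →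
        Ep p f ^ ((p / q) ^ (1 / C)) ≤ Ep q f ∧ q ≤ M ^ C * p := by
  refine ⟨20 / ε, (one_le_div hε₀).2 (by linarith), ?_⟩
  intro n p q M f hf hm hp hpq hq hglobal hμq hexp
  have hq₀ : 0 < q := hp.trans_le hpq
  have hμp₀ : 0 < Ep p f := (Real.exp_pos _).trans_le hexp
  have hmono : Ep p f ≤ Ep q f := hm.Ep_le_Ep hp.le hpq hq.le
  have hμq₀ : 0 < Ep q f := hμp₀.trans_le hmono
  have hlogq_lower : 1 / 2 < -Real.log (Ep q f) := half_lt_neg_log hμq₀ hμq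
  have hlogp_lower : 1 / 2 < -Real.log (Ep p f) := half_lt_neg_log hμp₀ (hmono.trans hμq)
  have hlogp_upper : -Real.log (Ep p f) ≤ ε / 20 * M := by
    have hlog := (Real.le_log_iff_exp_le hμp₀).2 hexp
    rw [div_div_eq_mul_div, mul_div_right_comm] at hlog
    linarith only [hlog]
  have hM : 0 < M := pos_of_mul_pos_right
    (lt_of_lt_of_le (by norm_num) (hlogp_lower.le.trans hlogp_upper)) (by positivity)
  have hlogp_le : -Real.log (Ep p f) ≤ M :=
    hlogp_upper.trans (mul_le_of_le_one_left hM.le (by linarith))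
  have hlogq : -Real.log (Ep q f) ≤ (p / q) ^ (1 / (20 / ε)) * -Real.log (Ep p f) := by
    rw [one_div_div]
    exact neg_log_Ep_le hf hm hp hpq hq hε₀.le hμp₀ hμq fun x hx J hJ =>
      hglobal x hx.1 hx.2 J <| hJ.trans <|
        (mul_le_of_le_one_left (by linarith) (by linarith)).trans hlogp_le
  constructor
  · rw [← Real.log_le_log_iff (Real.rpow_pos_of_pos hμp₀ _) hμq₀, Real.log_rpow hμp₀]
    linarith only [hlogq]
  · refine le_rpow_mul_of_one_le_div_rpow_mul hp hq₀ (by positivity) hM.le ?_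
    have hhalf : -Real.log (Ep p f) ≤ 1 / 2 * M :=
      hlogp_upper.trans (mul_le_mul_of_nonneg_right (by linarith) hM.le)
    have hratio : 0 < (p / q) ^ (1 / (20 / ε)) := by positivity
    nlinarith only [hlogq_lower, hlogq, mul_le_mul_of_nonneg_left hhalf hratio.le]

/-- the sharp threshold theorem for global monotone functions
(Theorem 4.10 / Theorem 1.6). -/
theorem statement14 :
    ∃ C : ℝ, 1 ≤ C ∧
      ∀ (n : ℕ) (p q M : ℝ) (f : (Fin n → Bool) → ℝ),
        (∀ x, f x = 0 ∨ f x = 1) → Mono f →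
        0 < p → p < q → q ≤ 1/2 → 0 < M →
        (∀ x : ℝ, p ≤ x → x ≤ q →
          ∀ J : Finset (Fin n), (J.card : ℝ) ≤ M →
            Ep x (restrict1 J f) ≤ Ep x f ^ ((0.01 : ℝ))) →
        Ep q f ≤ 1/2 →
        Real.exp (-(M / C)) ≤ Ep p f →
        Ep p f ^ ((p / q) ^ (1 / C)) ≤ Ep q f ∧ q ≤ M ^ C * p := by
  obtain ⟨C, hC, h⟩ := statement14_general (ε := 0.01) (by norm_num) (by norm_num)
  exact ⟨C, hC, fun n p q M f hf hm hp hpq hq _ => h n p q M f hf hm hp hpq.le (by linarith)⟩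

end GlobalHC
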